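/- arXiv:1009.3637 — 2 statements merged into one kernel-verified Lean document; each statement's English description precedes it below -/
import Mathlib

section
/- Let k be an infinite field, let f_1,…,f_m ∈ k[y_1,…,y_M] have total degrees d_1,…,d_m, let x ∈ k^M be a common zero of the f_i, let g_i be the translate of f_i to x, and let ℓ_i be the degree-1 homogeneous component of g_i. Then for every v ∈ k^M with ℓ_i(v) = 0 for all i (a tangent direction at x), the affine line through x with direction v is contained in V(f_1,…,f_m) if and only if for every i and every j with 2 ≤ j ≤ d_i the degree-j homogeneous component of g_i vanishes at v; moreover, for every j > d_i the degree-j homogeneous component of g_i is identically zero. Hence inside the tangent space at x the directions of lines through x contained in V(f_1,…,f_m) are cut out by at most (d_1 − 1) + ⋯ + (d_m − 1) equations. -/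
open MvPolynomial

theorem aux_totalDegree {k : Type*} [Field k] {M : ℕ} (f : MvPolynomial (Fin M) k)
    (x : Fin M → k) :
    (bind₁ (fun j => C (x j) + X j) f : MvPolynomial (Fin M) k).totalDegree
      ≤ f.totalDegree := by
  conv_lhs => rw [f.as_sum, map_sum]
  refine totalDegree_finsetSum_le fun s hs => ?_
  rw [bind₁_monomial]
  refine (totalDegree_mul _ _).trans ?_
  rw [totalDegree_C, zero_add]
  refine (totalDegree_finsetProd _ _).trans ?_
  refine le_trans ?_ (le_totalDegree hs)
  rw [Finsupp.sum]
  refine Finset.sum_le_sum fun j _ => ?_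
  refine (totalDegree_pow _ _).trans ?_
  have h : (C (x j) + X j : MvPolynomial (Fin M) k).totalDegree ≤ 1 := by
    refine (totalDegree_add _ _).trans ?_
    simp
  calc _ ≤ s j * 1 := Nat.mul_le_mul_left _ h
    _ = _ := mul_one _

theorem aux_homog {k : Type*} [Field k] {M : ℕ} (f : MvPolynomial (Fin M) k) (n : ℕ)
    (hf : f.IsHomogeneous n) (t : k) (v : Fin M → k) :
    eval (t • v) f = t ^ n * eval v f := by
  rw [eval_eq, eval_eq, Finset.mul_sum]
  refine Finset.sum_congr rfl fun s hs => ?_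
  have h : ∑ i ∈ s.support, s i = n := by
    have := hf (mem_support_iff.mp hs)
    simpa [Finsupp.weight_apply, Finsupp.sum] using this
  simp only [Pi.smul_apply, smul_eq_mul, mul_pow, Finset.prod_mul_distrib,
    Finset.prod_pow_eq_pow_sum, h]
  ring

theorem aux_eval {k : Type*} [Field k] {M : ℕ} (f : MvPolynomial (Fin M) k)
    (x v : Fin M → k) (t : k) :
    eval (x + t • v) f = ∑ j ∈ Finset.range (f.totalDegree + 1),
      t ^ j * eval v (homogeneousComponent j
        (bind₁ (fun j => C (x j) + X j) f : MvPolynomial (Fin M) k)) := by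
  have h1 : eval (x + t • v) f
      = eval (t • v) (bind₁ (fun j => C (x j) + X j) f : MvPolynomial (Fin M) k) := by
    rw [← coe_aeval_eq_eval, ← coe_aeval_eq_eval]
    simp only [RingHom.coe_coe, aeval_bind₁]
    congr 2
    ext i
    simp
  set g := (bind₁ (fun j => C (x j) + X j) f : MvPolynomial (Fin M) k) with hg
  have hle : g.totalDegree ≤ f.totalDegree := aux_totalDegree f x
  rw [h1]
  conv_lhs => rw [← sum_homogeneousComponent g, map_sum]
  rw [← Finset.sum_subset (Finset.range_mono (Nat.succ_le_succ hle))]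
  · exact Finset.sum_congr rfl fun j _ =>
      aux_homog _ _ (homogeneousComponent_isHomogeneous j g) t v
  · intro j _ hj
    rw [homogeneousComponent_eq_zero j g (by simpa [Nat.succ_le_iff] using hj)]
    simp

/-- Let `f_1,…,f_m` have total degrees `d_1,…,d_m`, let `x` be a common zero,
`g_i` the translate of `f_i` to `x` and `ℓ_i` the degree-1 component of `g_i`. For every
tangent direction `v` (i.e. `ℓ_i(v) = 0` for all `i`), the affine line through `x` with
direction `v` lies in `V(f_1,…,f_m)` iff for all `i` and all `2 ≤ j ≤ d_i` the degree-`j`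
homogeneous component of `g_i` vanishes at `v`; moreover for `j > d_i` the degree-`j`
homogeneous component of `g_i` is identically zero. -/
theorem lines_through_point_cut_out_by_higher_components
    {k : Type*} [Field k] [Infinite k] {M m : ℕ}
    (F : Fin m → MvPolynomial (Fin M) k) (d : Fin m → ℕ)
    (hd : ∀ i, (F i).totalDegree = d i)
    (x : Fin M → k) (hx : ∀ i, eval x (F i) = 0)
    (G : Fin m → MvPolynomial (Fin M) k)
    (hG : ∀ i, G i = bind₁ (fun j => C (x j) + X j) (F i))
    (L : Fin m → MvPolynomial (Fin M) k)
    (hL : ∀ i, L i = homogeneousComponent 1 (G i)) :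
    (∀ v : Fin M → k, (∀ i, eval v (L i) = 0) →
      ((∀ t : k, ∀ i, eval (x + t • v) (F i) = 0) ↔
        ∀ i, ∀ j : ℕ, 2 ≤ j → j ≤ d i →
          eval v (homogeneousComponent j (G i)) = 0)) ∧
    (∀ i, ∀ j : ℕ, d i < j → homogeneousComponent j (G i) = 0) := by
  have hzero : ∀ i, ∀ j : ℕ, d i < j → homogeneousComponent j (G i) = 0 := by
    intro i j hj
    refine homogeneousComponent_eq_zero _ _ (lt_of_le_of_lt ?_ hj)
    rw [hG, ← hd]
    exact aux_totalDegree _ _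
  have hev : ∀ i (v : Fin M → k) (t : k), eval (x + t • v) (F i) =
      ∑ j ∈ Finset.range (d i + 1), t ^ j * eval v (homogeneousComponent j (G i)) := by
    intro i v t
    rw [aux_eval, hd, hG]
  refine ⟨fun v hv => ⟨fun h i j _ hj => ?_, fun h t i => ?_⟩, hzero⟩
  · have hp : (∑ j ∈ Finset.range (d i + 1), Polynomial.monomial j
        (eval v (homogeneousComponent j (G i)))) = 0 := by
      refine Polynomial.funext fun t => ?_
      rw [Polynomial.eval_finsetSum, Polynomial.eval_zero, ← h t i, hev]
      refine Finset.sum_congr rfl fun j _ => ?_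
      rw [Polynomial.eval_monomial, mul_comm]
    have := congrArg (fun p => Polynomial.coeff p j) hp
    simpa [Polynomial.finsetSum_coeff, Polynomial.coeff_monomial, Nat.lt_succ_iff, hj,
      Finset.sum_ite_eq'] using this
  · rw [hev]
    refine Finset.sum_eq_zero fun j hj => ?_
    have hj' : j ≤ d i := Nat.lt_succ_iff.mp (Finset.mem_range.mp hj)
    have : eval v (homogeneousComponent j (G i)) = 0 := by
      rcases Nat.lt_or_ge j 2 with h2 | h2
      · interval_cases j
        · have h0 := hev i 0 0
          rw [smul_zero, add_zero, hx, Finset.sum_eq_single 0] at h0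
          · rw [homogeneousComponent_zero] at h0 ⊢
            simpa using h0.symm
          · intro b _ hb
            simp [hb]
          · simp
        · rw [← hL]; exact hv i
      · exact h i j h2 hj'
    rw [this, mul_zero]
end

section
/- Let k be an infinite field, let f_1,…,f_m ∈ k[y_1,…,y_M] each have total degree at most 2, let X = V(f_1,…,f_m) and let x ∈ X. Then the set { y ∈ k^M : x + t·(y − x) ∈ X for all t ∈ k } equals the set { y ∈ X : Σ_{j=1}^{M} (y_j − x_j) · (∂f_i/∂y_j)(x) = 0 for all i }. In other words, for a quadratic variety X the intersection of X with its embedded affine tangent space at x is exactly the union of the affine lines through x contained in X (it is a cone with vertex x). -/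
open MvPolynomial

/-- Restriction of a polynomial to the line through `x` with direction `v`. -/
noncomputable def lineRestr {k : Type*} [Field k] {M : ℕ} (x v : Fin M → k)
    (p : MvPolynomial (Fin M) k) : Polynomial k :=
  aeval (fun j => Polynomial.C (x j) + Polynomial.C (v j) * Polynomial.X) p

theorem lineRestr_eval {k : Type*} [Field k] {M : ℕ} (x v : Fin M → k)
    (p : MvPolynomial (Fin M) k) (t : k) :
    (lineRestr x v p).eval t = eval (x + t • v) p := by
  unfold lineRestr
  induction p using MvPolynomial.induction_on with
  | C a => simp [algebraMap_eq]
  | add p q hp hq => simp [hp, hq]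
  | mul_X p j hp => simp [hp, mul_comm t]

theorem lineRestr_coeff_one {k : Type*} [Field k] {M : ℕ} (x v : Fin M → k)
    (p : MvPolynomial (Fin M) k) :
    (lineRestr x v p).coeff 1 = ∑ j, v j * eval x (pderiv j p) := by
  have h : (lineRestr x v p).derivative.eval 0 = ∑ j, v j * eval x (pderiv j p) := by
    induction p using MvPolynomial.induction_on with
    | C a => simp [lineRestr]
    | add p q hp hq =>
      have : lineRestr x v (p + q) = lineRestr x v p + lineRestr x v q := by simp [lineRestr]
      simp [this, hp, hq, mul_add, Finset.sum_add_distrib]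
    | mul_X p i hp =>
      have : lineRestr x v (p * X i) =
          lineRestr x v p * (Polynomial.C (x i) + Polynomial.C (v i) * Polynomial.X) := by
        simp [lineRestr]
      have e := lineRestr_eval x v p 0
      simp only [zero_smul, add_zero] at e
      simp only [this, Polynomial.derivative_mul, Polynomial.eval_add, Polynomial.eval_mul, hp, e]
      simp [pderiv_X, Pi.single_apply, mul_add, Finset.sum_add_distrib, Finset.sum_mul, apply_ite]
      simp only [mul_comm, mul_left_comm]
      ring
  rw [← h, ← Polynomial.coeff_zero_eq_eval_zero, Polynomial.coeff_derivative]
  simp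

theorem lineRestr_natDegree {k : Type*} [Field k] {M : ℕ} (x v : Fin M → k)
    (p : MvPolynomial (Fin M) k) (hp : p.totalDegree ≤ 2) :
    (lineRestr x v p).natDegree ≤ 2 := by
  have := MvPolynomial.aeval_natDegree_le p hp
    (fun j => Polynomial.C (x j) + Polynomial.C (v j) * Polynomial.X) (n := 1)
    (fun j => by compute_degree)
  simpa [lineRestr] using this

/-- For a quadratic variety `X = V(f_1,…,f_m)` (each `f_i` of total degree at
most 2) and `x ∈ X`, the set of points `y` such that the whole affine line through `x` and
`y` lies in `X` equals the intersection of `X` with its embedded affine tangent space at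
`x`. -/
theorem tangent_intersection_of_quadratic_is_cone_of_lines
    {k : Type*} [Field k] [Infinite k] {M m : ℕ}
    (F : Fin m → MvPolynomial (Fin M) k)
    (hdeg : ∀ i, (F i).totalDegree ≤ 2)
    (x : Fin M → k) (hx : ∀ i, eval x (F i) = 0) :
    {y : Fin M → k | ∀ t : k, ∀ i, eval (x + t • (y - x)) (F i) = 0} =
      {y : Fin M → k | (∀ i, eval y (F i) = 0) ∧
        ∀ i, ∑ j : Fin M, (y j - x j) * eval x (pderiv j (F i)) = 0} := by
  ext y
  simp only [Set.mem_setOf_eq]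
  constructor
  · intro h
    refine ⟨fun i => by simpa using h 1 i, fun i => ?_⟩
    have h0 : lineRestr x (y - x) (F i) = 0 :=
      Polynomial.funext fun t => by rw [lineRestr_eval, h t i]; simp
    have := lineRestr_coeff_one x (y - x) (F i)
    rw [h0] at this
    simpa using this.symm
  · rintro ⟨h1, h2⟩ t i
    have c1 : (lineRestr x (y - x) (F i)).coeff 1 = 0 := by
      rw [lineRestr_coeff_one]; simpa using h2 i
    have hd := lineRestr_natDegree x (y - x) (F i) (hdeg i)
    have ev : ∀ s, eval (x + s • (y - x)) (F i) =
        (lineRestr x (y - x) (F i)).coeff 0 + (lineRestr x (y - x) (F i)).coeff 2 * s ^ 2 := by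
      intro s
      rw [← lineRestr_eval, Polynomial.eval_eq_sum_range' (Nat.lt_succ_of_le hd)]
      simp [Finset.sum_range_succ, c1]
    have e0 := ev 0
    have e1 := ev 1
    simp [hx i] at e0
    simp [h1 i, ← e0] at e1
    rw [ev t, ← e0, ← e1]; simp
end
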